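/- arXiv:1807.03650 — 2 statements merged into one kernel-verified Lean document; each statement's English description precedes it below -/
import Mathlib

section
/- Consider the M-layer model on the three-node line graph with nodes 1, 2, 3 and links ℓ₁ = (1,2), ℓ₂ = (2,3), with thinning probabilities p_{ℓ₁}, p_{ℓ₂} ∈ (0,1] and node activation probabilities q₁, q₂, q₃ ∈ (0,1]. Then the probability that neither link exists on any layer satisfies P[W_{ℓ₁} = 0 and W_{ℓ₂} = 0] = [1 − q₂ + q₂ (1 − q₁ p_{ℓ₁})(1 − q₃ p_{ℓ₂})]^M. -/
open MeasureTheory Filter Finset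

open scoped Classical

/-- Bernoulli measure on `Bool` with success probability `p`. -/
noncomputable def bern (p : ℝ) : Measure Bool :=
  ENNReal.ofReal p • Measure.dirac true + ENNReal.ofReal (1 - p) • Measure.dirac false

/-- The `M`-layer model: mutually independent Bernoulli variables `Y_{m,ℓ}` (link
thinning, probability `p ℓ`) and `Z_{m,i}` (node activation, probability `q i`). -/
noncomputable def netμ (V : Type) [Fintype V] (M : ℕ) (p : V × V → ℝ) (q : V → ℝ) :
    Measure (((Fin M × (V × V)) ⊕ (Fin M × V)) → Bool) :=
  Measure.pi fun k =>
    bern (Sum.elim (fun a : Fin M × (V × V) => p a.2) (fun a : Fin M × V => q a.2) k)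

/-- Link `ℓ = (i,j)` exists on layer `m`: `Y_{m,ℓ} = Z_{m,i} = Z_{m,j} = 1`. -/
def exOn {V : Type} {M : ℕ} (m : Fin M) (ℓ : V × V)
    (ω : ((Fin M × (V × V)) ⊕ (Fin M × V)) → Bool) : Prop :=
  ω (Sum.inl (m, ℓ)) = true ∧ ω (Sum.inr (m, ℓ.1)) = true ∧ ω (Sum.inr (m, ℓ.2)) = true

/-- `W_ℓ`: the number of layers on which link `ℓ` exists. -/
noncomputable def Wnum {V : Type} {M : ℕ} (ℓ : V × V)
    (ω : ((Fin M × (V × V)) ⊕ (Fin M × V)) → Bool) : ℕ :=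
  (Finset.univ.filter fun m : Fin M => exOn m ℓ ω).card

/-- The weight of the outcome `b` under the Bernoulli law with success probability `r`. -/
def bernWeight (r : ℝ) (b : Bool) : ℝ := if b then r else 1 - r

instance isFiniteMeasure_bern (r : ℝ) : IsFiniteMeasure (bern r) := by
  unfold bern
  constructor
  simp

lemma bern_singleton_toReal {r : ℝ} (hr : r ∈ Set.Icc (0 : ℝ) 1) (b : Bool) :
    (bern r {b}).toReal = bernWeight r b := by
  have h0 := hr.1
  have h1 := sub_nonneg.2 hr.2
  cases b <;> simp [bern, bernWeight, h0, h1]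

/-- The probability of an event under a finite product of Bernoulli laws, as a finite sum. -/
lemma pi_bern_toReal {ι : Type*} [Fintype ι] [DecidableEq ι] {r : ι → ℝ}
    (hr : ∀ k, r k ∈ Set.Icc (0 : ℝ) 1) (S : Set (ι → Bool)) :
    ((Measure.pi fun k => bern (r k)) S).toReal =
      ∑ ω, (if ω ∈ S then 1 else 0) * ∏ k, bernWeight (r k) (ω k) := by
  have hS : (Finset.univ.filter (· ∈ S) : Finset (ι → Bool)) = S := by ext; simp
  change (Measure.pi fun k => bern (r k)).real S = _
  rw [← hS, ← sum_measureReal_singleton, Finset.sum_filter]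
  refine Finset.sum_congr rfl fun ω _ => ?_
  simp only [hS, measureReal_def, Measure.pi_singleton, ENNReal.toReal_prod,
    bern_singleton_toReal (hr _), ite_mul, one_mul, zero_mul]

/-- The total weight of the configurations that are `true` on all of `T`. -/
lemma sum_prod_bernWeight_cylinder {ι : Type*} [Fintype ι] [DecidableEq ι] (r : ι → ℝ) (T : Finset ι) :
    ∑ ω : ι → Bool, (if ∀ k ∈ T, ω k = true then 1 else 0) * ∏ k, bernWeight (r k) (ω k) =
      ∏ k ∈ T, r k := by
  have key : ∀ ω : ι → Bool,
      (if ∀ k ∈ T, ω k = true then 1 else 0) * ∏ k, bernWeight (r k) (ω k) =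
        ∏ k, (if k ∈ T → ω k = true then 1 else 0) * bernWeight (r k) (ω k) := by
    intro ω
    rw [Finset.prod_mul_distrib, Finset.prod_ite_zero]
    simp
  simp_rw [key]
  rw [← Fintype.prod_sum fun k b =>
    (if k ∈ T → b = true then (1 : ℝ) else 0) * bernWeight (r k) b]
  rw [← Finset.prod_subset (Finset.subset_univ T)]
  · exact Finset.prod_congr rfl fun k hk => by simp [hk, bernWeight]
  · intro k _ hk
    simp [hk, bernWeight]

/-- Configurations of the `M`-layer model, read layer by layer. -/
def layerEquiv (M : ℕ) (α β : Type*) :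
    (((Fin M × α) ⊕ (Fin M × β)) → Bool) ≃ (Fin M → (α ⊕ β) → Bool) :=
  (Equiv.arrowCongr (Equiv.prodSumDistrib (Fin M) α β).symm (Equiv.refl Bool)).trans
    (Equiv.curry (Fin M) (α ⊕ β) Bool)

/-- An event that imposes the same condition on each of the `M` independent layers has as its
probability the `M`-th power of the single-layer probability. -/
lemma netμ_forall_layer_toReal {V : Type} [Fintype V] [DecidableEq V] (M : ℕ) {p : V × V → ℝ} {q : V → ℝ}
    (hp : ∀ ℓ, p ℓ ∈ Set.Icc (0 : ℝ) 1) (hq : ∀ i, q i ∈ Set.Icc (0 : ℝ) 1)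
    (A : Set ((V × V) ⊕ V → Bool)) :
    (netμ V M p q {ω | ∀ m, layerEquiv M (V × V) V ω m ∈ A}).toReal =
      (∑ η, (if η ∈ A then 1 else 0) * ∏ k, bernWeight (Sum.elim p q k) (η k)) ^ M := by
  rw [netμ, pi_bern_toReal (by rintro (k | k) <;> simp only [Sum.elim_inl, Sum.elim_inr, hp, hq]),
    ← Fin.prod_const, Fintype.prod_sum fun (_ : Fin M) (η : (V × V) ⊕ V → Bool) =>
      (if η ∈ A then (1 : ℝ) else 0) * ∏ k, bernWeight (Sum.elim p q k) (η k)]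
  refine Fintype.sum_equiv (M := ℝ) (layerEquiv M (V × V) V) _ _ fun ω => ?_
  rw [Finset.prod_mul_distrib, Finset.prod_ite_zero]
  simp [Fintype.prod_sum_type, Fintype.prod_prod_type, Finset.prod_mul_distrib, layerEquiv]

/-- for the three-node line with links `ℓ₁ = (1,2)` and `ℓ₂ = (2,3)`,
`P[W_{ℓ₁} = 0 ∧ W_{ℓ₂} = 0] = [1 − q₂ + q₂ (1 − q₁ p₁)(1 − q₃ p₂)]^M`. -/
theorem stmt15 (M : ℕ) (hM : 1 ≤ M) (p1 p2 q1 q2 q3 : ℝ)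
    (hp1 : p1 ∈ Set.Ioc (0 : ℝ) 1) (hp2 : p2 ∈ Set.Ioc (0 : ℝ) 1)
    (hq1 : q1 ∈ Set.Ioc (0 : ℝ) 1) (hq2 : q2 ∈ Set.Ioc (0 : ℝ) 1)
    (hq3 : q3 ∈ Set.Ioc (0 : ℝ) 1) :
    ((netμ (Fin 3) M
        (fun ℓ => if ℓ = ((0 : Fin 3), (1 : Fin 3)) then p1
          else if ℓ = ((1 : Fin 3), (2 : Fin 3)) then p2 else 1)
        ![q1, q2, q3])
      {ω | Wnum ((0 : Fin 3), (1 : Fin 3)) ω = 0 ∧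
           Wnum ((1 : Fin 3), (2 : Fin 3)) ω = 0}).toReal
      = (1 - q2 + q2 * (1 - q1 * p1) * (1 - q3 * p2)) ^ M := by
  have hp : ∀ ℓ : Fin 3 × Fin 3, (if ℓ = ((0 : Fin 3), (1 : Fin 3)) then p1
      else if ℓ = ((1 : Fin 3), (2 : Fin 3)) then p2 else 1) ∈ Set.Icc (0 : ℝ) 1 := by
    intro ℓ
    split_ifs
    exacts [Set.Ioc_subset_Icc_self hp1, Set.Ioc_subset_Icc_self hp2, by simp]
  have hq : ∀ i, ![q1, q2, q3] i ∈ Set.Icc (0 : ℝ) 1 := by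
    intro i
    fin_cases i
    exacts [Set.Ioc_subset_Icc_self hq1, Set.Ioc_subset_Icc_self hq2,
      Set.Ioc_subset_Icc_self hq3]
  let T₁ : Finset ((Fin 3 × Fin 3) ⊕ Fin 3) := {Sum.inl (0, 1), Sum.inr 0, Sum.inr 1}
  let T₂ : Finset ((Fin 3 × Fin 3) ⊕ Fin 3) := {Sum.inl (1, 2), Sum.inr 1, Sum.inr 2}
  let T₃ : Finset ((Fin 3 × Fin 3) ⊕ Fin 3) :=
    {Sum.inl (0, 1), Sum.inl (1, 2), Sum.inr 0, Sum.inr 1, Sum.inr 2}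
  obtain ⟨A, hA⟩ : ∃ A : Set ((Fin 3 × Fin 3) ⊕ Fin 3 → Bool),
      ∀ η, η ∈ A ↔ (¬ ∀ k ∈ T₁, η k = true) ∧ ¬ ∀ k ∈ T₂, η k = true :=
    ⟨_, fun _ => Iff.rfl⟩
  have hset : {ω : ((Fin M × (Fin 3 × Fin 3)) ⊕ (Fin M × Fin 3)) → Bool |
      Wnum ((0 : Fin 3), (1 : Fin 3)) ω = 0 ∧ Wnum ((1 : Fin 3), (2 : Fin 3)) ω = 0} =
      {ω | ∀ m, layerEquiv M (Fin 3 × Fin 3) (Fin 3) ω m ∈ A} := by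
    ext ω
    simp only [Wnum, Finset.card_eq_zero, Finset.filter_eq_empty_iff, Set.mem_ofPred_eq, hA]
    simp [exOn, T₁, T₂, layerEquiv, forall_and]
  -- Inclusion–exclusion over the two events that a link exists.
  have hind : ∀ η : (Fin 3 × Fin 3) ⊕ Fin 3 → Bool, (if η ∈ A then (1 : ℝ) else 0) =
      (if ∀ k ∈ (∅ : Finset ((Fin 3 × Fin 3) ⊕ Fin 3)), η k = true then 1 else 0)
        - (if ∀ k ∈ T₁, η k = true then 1 else 0) - (if ∀ k ∈ T₂, η k = true then 1 else 0)
        + (if ∀ k ∈ T₃, η k = true then 1 else 0) := by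
    intro η
    have h₃ : (∀ k ∈ T₃, η k = true) ↔ (∀ k ∈ T₁, η k = true) ∧ ∀ k ∈ T₂, η k = true := by
      simp [T₁, T₂, T₃]
      tauto
    have hA := hA η
    have h₀ : ∀ k ∈ (∅ : Finset ((Fin 3 × Fin 3) ⊕ Fin 3)), η k = true := by simp
    rw [if_pos h₀]
    split_ifs <;> first | (exfalso; tauto) | norm_num
  rw [hset, netμ_forall_layer_toReal M hp hq]
  congr 1
  simp_rw [hind, add_mul, sub_mul, Finset.sum_add_distrib, Finset.sum_sub_distrib,
    sum_prod_bernWeight_cylinder]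
  simp [T₁, T₂, T₃]
  ring
end

section
/- Consider a sequence of M-layer models indexed by M on a fixed finite simple graph G = (V,E) with no isolated nodes, with parameters satisfying p_ℓ(M) M^{α_ℓ} → c_ℓ > 0 for each link ℓ and q_i(M) M^{β_i} → d_i > 0 for each node i, where α_ℓ, β_i ≥ 0 and α_ℓ + β_i + β_j = 1 for every link ℓ = (i,j). Assume β_k < 1 for every node k of degree at least 2 in G. Then the probability of the event B that every one of the M layers contains at most one link tends to 1 as M → ∞. -/
open MeasureTheory Filter Finset

open scoped Classical

/-- The Bernoulli law with a parameter in `[0,1]` is a probability measure. -/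
lemma bern_isProbabilityMeasure {p : ℝ} (h0 : 0 ≤ p) (h1 : p ≤ 1) :
    IsProbabilityMeasure (bern p) := by
  constructor
  simp only [bern, Measure.add_apply, Measure.smul_apply, measure_univ, smul_eq_mul, mul_one]
  rw [← ENNReal.ofReal_add h0 (by linarith)]
  simp

lemma bern_true (p : ℝ) : bern p {true} = ENNReal.ofReal p := by
  simp [bern]

/-- In a product of Bernoulli laws, the coordinates in `T` are all `true` with probability
the product of their parameters. -/
lemma pi_bern_forall_true {ι : Type*} [Fintype ι] (r : ι → ℝ) (h0 : ∀ k, 0 ≤ r k)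
    (h1 : ∀ k, r k ≤ 1) (T : Finset ι) :
    (Measure.pi fun k => bern (r k)).real {ω | ∀ k ∈ T, ω k = true} = ∏ k ∈ T, r k := by
  have := fun k => bern_isProbabilityMeasure (h0 k) (h1 k)
  have hset : {ω : ι → Bool | ∀ k ∈ T, ω k = true} =
      Set.univ.pi fun k => if k ∈ T then {true} else Set.univ := by
    ext ω
    simp only [Set.mem_ofPred_eq, Set.mem_univ_pi]
    refine forall_congr' fun k => ?_
    by_cases hk : k ∈ T <;> simp [hk]
  have hfac : ∀ k, bern (r k) (if k ∈ T then {true} else Set.univ) =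
      if k ∈ T then ENNReal.ofReal (r k) else 1 := by
    intro k
    by_cases hk : k ∈ T <;> simp only [hk, if_true, if_false, bern_true, measure_univ]
  rw [Measure.real, hset, Measure.pi_pi, Finset.prod_congr rfl fun k _ => hfac k,
    Finset.prod_ite_mem, Finset.univ_inter, ENNReal.toReal_prod]
  exact Finset.prod_congr rfl fun k _ => ENNReal.toReal_ofReal (h0 k)

section Model

variable {V : Type} [Fintype V]

lemma netμ_isProbabilityMeasure (M : ℕ) {p : V × V → ℝ} {q : V → ℝ}
    (hp : ∀ ℓ, p ℓ ∈ Set.Ioc (0 : ℝ) 1) (hq : ∀ i, q i ∈ Set.Ioc (0 : ℝ) 1) :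
    IsProbabilityMeasure (netμ V M p q) := by
  have : ∀ k : (Fin M × (V × V)) ⊕ (Fin M × V), IsProbabilityMeasure
      (bern (Sum.elim (fun a : Fin M × (V × V) => p a.2) (fun a : Fin M × V => q a.2) k)) := by
    rintro (a | a)
    · exact bern_isProbabilityMeasure (hp a.2).1.le (hp a.2).2
    · exact bern_isProbabilityMeasure (hq a.2).1.le (hq a.2).2
  unfold netμ
  infer_instance

variable [DecidableEq V]

/-- The nodes incident to at least one of two links. -/
def pairNodes (ℓ ℓ' : V × V) : Finset V := {ℓ.1, ℓ.2} ∪ {ℓ'.1, ℓ'.2}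

/-- Two distinct links exist together on a given layer with probability the product of the
parameters of both links and of all nodes they touch. -/
lemma netμ_real_exOn_pair (M : ℕ) {p : V × V → ℝ} {q : V → ℝ}
    (hp : ∀ ℓ, p ℓ ∈ Set.Ioc (0 : ℝ) 1) (hq : ∀ i, q i ∈ Set.Ioc (0 : ℝ) 1)
    (m : Fin M) {ℓ ℓ' : V × V} (hne : ℓ ≠ ℓ') :
    (netμ V M p q).real {ω | exOn m ℓ ω ∧ exOn m ℓ' ω} =
      p ℓ * p ℓ' * ∏ i ∈ pairNodes ℓ ℓ', q i := by
  have hset : {ω : ((Fin M × (V × V)) ⊕ (Fin M × V)) → Bool | exOn m ℓ ω ∧ exOn m ℓ' ω} =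
      {ω | ∀ k ∈ (({ℓ, ℓ'} : Finset (V × V)).map ⟨Prod.mk m, Prod.mk_right_injective m⟩).disjSum
        ((pairNodes ℓ ℓ').map ⟨Prod.mk m, Prod.mk_right_injective m⟩), ω k = true} := by
    ext ω
    simp only [Set.mem_ofPred_eq, exOn, pairNodes, Sum.forall, Finset.inl_mem_disjSum,
      Finset.inr_mem_disjSum, Finset.mem_map, Function.Embedding.coeFn_mk, Finset.mem_union,
      Finset.mem_insert, Finset.mem_singleton]
    constructor
    · rintro ⟨⟨h1, h2, h3⟩, h4, h5, h6⟩
      constructor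
      · rintro _ ⟨x, rfl | rfl, rfl⟩ <;> assumption
      · rintro _ ⟨x, (rfl | rfl) | (rfl | rfl), rfl⟩ <;> assumption
    · rintro ⟨h, h'⟩
      exact ⟨⟨h _ ⟨_, by simp, rfl⟩, h' _ ⟨_, by simp, rfl⟩, h' _ ⟨_, by simp, rfl⟩⟩,
        h _ ⟨_, by simp, rfl⟩, h' _ ⟨_, by simp, rfl⟩, h' _ ⟨_, by simp, rfl⟩⟩
  rw [hset, netμ, pi_bern_forall_true, Finset.prod_disjSum, Finset.prod_map, Finset.prod_map]
  · simp [Finset.prod_pair hne]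
  · rintro (a | a)
    · exact (hp a.2).1.le
    · exact (hq a.2).1.le
  · rintro (a | a)
    · exact (hp a.2).2
    · exact (hq a.2).2

/-- Union bound: the probability that every layer contains at most one link of `E`. -/
lemma one_sub_le_netμ_real (M : ℕ) {p : V × V → ℝ} {q : V → ℝ}
    (hp : ∀ ℓ, p ℓ ∈ Set.Ioc (0 : ℝ) 1) (hq : ∀ i, q i ∈ Set.Ioc (0 : ℝ) 1)
    (E : Finset (V × V)) :
    1 - ∑ x ∈ E.offDiag, M * (p x.1 * p x.2 * ∏ i ∈ pairNodes x.1 x.2, q i) ≤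
      (netμ V M p q).real
        {ω | ∀ m : Fin M, ∀ ℓ ∈ E, ∀ ℓ' ∈ E, exOn m ℓ ω → exOn m ℓ' ω → ℓ = ℓ'} := by
  have := netμ_isProbabilityMeasure M hp hq
  set B := {ω : ((Fin M × (V × V)) ⊕ (Fin M × V)) → Bool |
    ∀ m : Fin M, ∀ ℓ ∈ E, ∀ ℓ' ∈ E, exOn m ℓ ω → exOn m ℓ' ω → ℓ = ℓ'} with hB
  have hcompl : (netμ V M p q).real Bᶜ = 1 - (netμ V M p q).real B :=
    probReal_compl_eq_one_sub B.toFinite.measurableSet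
  have hsub : Bᶜ ⊆ ⋃ x ∈ E.offDiag, ⋃ m ∈ (Finset.univ : Finset (Fin M)),
      {ω | exOn m x.1 ω ∧ exOn m x.2 ω} := by
    intro ω hω
    simp only [hB, Set.mem_compl_iff, Set.mem_ofPred_eq, not_forall] at hω
    obtain ⟨m, ℓ, hℓ, ℓ', hℓ', h, h', hne⟩ := hω
    simp only [Set.mem_iUnion]
    exact ⟨(ℓ, ℓ'), Finset.mem_offDiag.2 ⟨hℓ, hℓ', hne⟩, m, Finset.mem_univ m, h, h'⟩
  have hle : (netμ V M p q).real Bᶜ ≤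
      ∑ x ∈ E.offDiag, M * (p x.1 * p x.2 * ∏ i ∈ pairNodes x.1 x.2, q i) := by
    refine (measureReal_mono hsub (measure_ne_top _ _)).trans ((measureReal_biUnion_finset_le _ _).trans ?_)
    refine Finset.sum_le_sum fun x hx => (measureReal_biUnion_finset_le _ _).trans ?_
    rw [Finset.sum_congr rfl fun m _ =>
      netμ_real_exOn_pair M hp hq m (Finset.mem_offDiag.1 hx).2.2]
    simp
  linarith

end Model

/-- Two distinct links, neither the reverse of the other and neither a loop, share at most
one node. -/
lemma eq_of_mem_inter_endpoints {V : Type*} [DecidableEq V] {ℓ ℓ' : V × V} (h1 : ℓ.1 ≠ ℓ.2)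
    (hne : ℓ ≠ ℓ') (hrev : (ℓ.2, ℓ.1) ≠ ℓ') {a b : V}
    (ha : a ∈ ({ℓ.1, ℓ.2} ∩ {ℓ'.1, ℓ'.2} : Finset V))
    (hb : b ∈ ({ℓ.1, ℓ.2} ∩ {ℓ'.1, ℓ'.2} : Finset V)) : a = b := by
  obtain ⟨i, j⟩ := ℓ
  obtain ⟨i', j'⟩ := ℓ'
  simp only [Finset.mem_inter, Finset.mem_insert, Finset.mem_singleton, ne_eq,
    Prod.mk.injEq] at *
  grind

/-- If `f M * M ^ a` converges and `1 < a`, then `M * f M` tends to `0`. -/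
lemma tendsto_natCast_mul_zero_of_rpow {f : ℕ → ℝ} {a b : ℝ} (ha : 1 < a)
    (hf : Tendsto (fun M : ℕ => f M * (M : ℝ) ^ a) atTop (nhds b)) :
    Tendsto (fun M : ℕ => M * f M) atTop (nhds 0) := by
  have h := hf.mul ((tendsto_rpow_neg_atTop (sub_pos.2 ha)).comp tendsto_natCast_atTop_atTop)
  rw [mul_zero] at h
  refine h.congr' ?_
  filter_upwards [eventually_gt_atTop 0] with M hM
  have hM' : (0 : ℝ) < M := by exact_mod_cast hM
  simp only [Function.comp_apply]
  rw [mul_assoc, ← Real.rpow_add hM', show a + -(a - 1) = 1 by ring, Real.rpow_one, mul_comm]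

/-- under the critical scaling `α_ℓ + β_i + β_j = 1` for every link
`ℓ = (i,j)`, with `β_k < 1` for every node of degree at least 2 and no isolated nodes,
the probability that every layer contains at most one link tends to 1. -/
theorem stmt18 {V : Type} [Fintype V] [DecidableEq V] (E : Finset (V × V))
    (hE1 : ∀ ℓ ∈ E, ℓ.1 ≠ ℓ.2) (hE2 : ∀ ℓ ∈ E, (ℓ.2, ℓ.1) ∉ E)
    (hiso : ∀ v : V, ∃ ℓ ∈ E, ℓ.1 = v ∨ ℓ.2 = v)
    (p : ℕ → (V × V) → ℝ) (q : ℕ → V → ℝ)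
    (hp : ∀ M ℓ, p M ℓ ∈ Set.Ioc (0 : ℝ) 1) (hq : ∀ M i, q M i ∈ Set.Ioc (0 : ℝ) 1)
    (α c : (V × V) → ℝ) (β d : V → ℝ)
    (hα : ∀ ℓ ∈ E, 0 ≤ α ℓ) (hβ : ∀ i, 0 ≤ β i)
    (hc : ∀ ℓ ∈ E, 0 < c ℓ) (hd : ∀ i, 0 < d i)
    (hplim : ∀ ℓ ∈ E, Tendsto (fun M : ℕ => p M ℓ * (M : ℝ) ^ (α ℓ)) atTop (nhds (c ℓ)))
    (hqlim : ∀ i, Tendsto (fun M : ℕ => q M i * (M : ℝ) ^ (β i)) atTop (nhds (d i)))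
    (hcrit : ∀ ℓ ∈ E, α ℓ + β ℓ.1 + β ℓ.2 = 1)
    (hreg : ∀ k : V, 2 ≤ (E.filter fun ℓ => ℓ.1 = k ∨ ℓ.2 = k).card → β k < 1) :
    Tendsto (fun M : ℕ =>
        ((netμ V M (p M) (q M))
          {ω | ∀ m : Fin M, ∀ ℓ ∈ E, ∀ ℓ' ∈ E, exOn m ℓ ω → exOn m ℓ' ω → ℓ = ℓ'}).toReal)
      atTop (nhds 1) := by
  have hpair : ∀ x ∈ E.offDiag, Tendsto (fun M : ℕ =>
      M * (p M x.1 * p M x.2 * ∏ i ∈ pairNodes x.1 x.2, q M i)) atTop (nhds 0) := by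
    rintro ⟨ℓ, ℓ'⟩ hx
    obtain ⟨hℓ, hℓ', hne⟩ := Finset.mem_offDiag.1 hx
    simp only at hℓ hℓ' hne ⊢
    have hrev : (ℓ.2, ℓ.1) ≠ ℓ' := fun h => hE2 ℓ hℓ (h ▸ hℓ')
    have hshared : ∑ i ∈ ({ℓ.1, ℓ.2} ∩ {ℓ'.1, ℓ'.2} : Finset V), β i < 1 := by
      rcases Finset.eq_empty_or_nonempty ({ℓ.1, ℓ.2} ∩ {ℓ'.1, ℓ'.2} : Finset V) with h | ⟨k, hk⟩
      · rw [h]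
        simp
      · have hsing : ({ℓ.1, ℓ.2} ∩ {ℓ'.1, ℓ'.2} : Finset V) = {k} :=
          Finset.eq_singleton_iff_unique_mem.2
            ⟨hk, fun b hb => eq_of_mem_inter_endpoints (hE1 ℓ hℓ) hne hrev
              hb hk⟩
        rw [hsing, Finset.sum_singleton]
        refine hreg k (Finset.one_lt_card.2 ⟨ℓ, ?_, ℓ', ?_, hne⟩) <;>
          simp only [Finset.mem_inter, Finset.mem_insert, Finset.mem_singleton] at hk
        · exact Finset.mem_filter.2 ⟨hℓ, hk.1.imp Eq.symm Eq.symm⟩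
        · exact Finset.mem_filter.2 ⟨hℓ', hk.2.imp Eq.symm Eq.symm⟩
    have hsum : ∑ i ∈ pairNodes ℓ ℓ', β i +
        ∑ i ∈ ({ℓ.1, ℓ.2} ∩ {ℓ'.1, ℓ'.2} : Finset V), β i =
        (β ℓ.1 + β ℓ.2) + (β ℓ'.1 + β ℓ'.2) := by
      rw [← Finset.sum_pair (hE1 ℓ hℓ), ← Finset.sum_pair (hE1 ℓ' hℓ'),
        pairNodes, Finset.sum_union_inter]
    have hexp : 1 < α ℓ + α ℓ' + ∑ i ∈ pairNodes ℓ ℓ', β i := by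
      linarith [hcrit ℓ hℓ, hcrit ℓ' hℓ']
    refine tendsto_natCast_mul_zero_of_rpow hexp
      ((((hplim ℓ hℓ).mul (hplim ℓ' hℓ')).mul
        (tendsto_finsetProd (pairNodes ℓ ℓ') fun i _ => hqlim i)).congr' ?_)
    filter_upwards [eventually_gt_atTop 0] with M hM
    have hM' : (0 : ℝ) < M := by exact_mod_cast hM
    rw [Finset.prod_mul_distrib, Real.rpow_add hM', Real.rpow_add hM',
      Real.rpow_sum_of_pos hM']
    ring
  have hlow := (tendsto_finsetSum _ hpair).const_sub 1
  rw [Finset.sum_const_zero, sub_zero] at hlow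
  refine tendsto_of_tendsto_of_tendsto_of_le_of_le hlow tendsto_const_nhds
    (fun M => ?_) (fun M => ?_)
  · exact one_sub_le_netμ_real M (hp M) (hq M) E
  · have := netμ_isProbabilityMeasure M (hp M) (hq M)
    exact measureReal_le_one
end
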